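/- Let ρ be the Gaussian measure on ℝ^d with mean μ and covariance Σ = LLᵀ, realized as the law of μ + L·Z where the coordinates of Z are i.i.d. standard normal. Let H ∈ ℝ^{d'×d}, R ∈ ℝ^{d'×d'} symmetric positive definite, β ∈ ℝ^{d'}, and define h(x) := (1/2)(Hx − β)ᵀ R⁻¹ (Hx − β), A := Hᵀ R⁻¹ H, B := Hᵀ R⁻¹, and Ω := μμᵀ. Then for every y ∈ ℝ^d, ∫ (⟨x,y⟩ + 1)² ( h(x) − ∫ h dρ ) dρ(x) = yᵀ( Σ A Σ + Ω A Σ + Σ A Ω − μ (Σ B β)ᵀ − (Σ B β) μᵀ ) y + 2 yᵀ( Σ A μ − Σ B β ). -/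

import Mathlib

open MeasureTheory Matrix ProbabilityTheory

/-- The standard Gaussian measure on `ℝ^d`, with i.i.d. standard normal coordinates. -/
noncomputable def stdGaussianPi (d : ℕ) : Measure (Fin d → ℝ) :=
  Measure.pi fun _ : Fin d => gaussianReal 0 1

/-- `f` is `ν`-integrable with integral `c`. -/
def HasExpectation {α : Type*} [MeasurableSpace α] (ν : Measure α) (f : α → ℝ) (c : ℝ) : Prop :=
  Integrable f ν ∧ ∫ x, f x ∂ν = c

namespace HasExpectation

variable {α : Type*} [MeasurableSpace α] {ν : Measure α} {f g : α → ℝ} {a b : ℝ}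

lemma add (hf : HasExpectation ν f a) (hg : HasExpectation ν g b) :
    HasExpectation ν (fun x => f x + g x) (a + b) :=
  ⟨hf.1.add hg.1, by rw [integral_add hf.1 hg.1, hf.2, hg.2]⟩

lemma const_mul (hf : HasExpectation ν f a) (c : ℝ) :
    HasExpectation ν (fun x => c * f x) (c * a) :=
  ⟨hf.1.const_mul c, by rw [integral_const_mul, hf.2]⟩

lemma const [IsProbabilityMeasure ν] (c : ℝ) : HasExpectation ν (fun _ => c) c :=
  ⟨integrable_const c, by simp⟩

lemma sum {ι : Type*} {s : Finset ι} {F : ι → α → ℝ} {c : ι → ℝ}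
    (h : ∀ i ∈ s, HasExpectation ν (F i) (c i)) :
    HasExpectation ν (fun x => ∑ i ∈ s, F i x) (∑ i ∈ s, c i) :=
  ⟨integrable_finsetSum s fun i hi => (h i hi).1, by
    rw [integral_finsetSum s fun i hi => (h i hi).1]
    exact Finset.sum_congr rfl fun i hi => (h i hi).2⟩

lemma congr (hf : HasExpectation ν f a) (hfg : ∀ x, g x = f x) (hab : b = a) :
    HasExpectation ν g b := by
  obtain rfl : g = f := funext hfg
  rwa [hab]

end HasExpectation

lemma deriv_mul_exp_half_sq {p p' : ℝ → ℝ} (hp : ∀ t, HasDerivAt p (p' t) t) (s : ℝ) :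
    deriv (fun t => p t * Real.exp (s * t ^ 2 / 2))
      = fun t => (p' t + s * t * p t) * Real.exp (s * t ^ 2 / 2) := by
  funext t
  have h : HasDerivAt (fun t : ℝ => s * t ^ 2 / 2) (s * t) t := by
    refine (((hasDerivAt_pow 2 t).const_mul s).div_const 2).congr_deriv ?_
    norm_num
    ring
  refine ((hp t).mul h.exp).deriv.trans ?_
  ring

lemma integral_pow_gaussianReal_zero (v : NNReal) (n : ℕ) :
    ∫ x, x ^ n ∂(gaussianReal 0 v)
      = iteratedDeriv n (fun t : ℝ => Real.exp (v * t ^ 2 / 2)) 0 := by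
  have h := iteratedDeriv_mgf_zero (X := id) (μ := gaussianReal 0 v) (by simp) n
  rw [mgf_id_gaussianReal] at h
  simpa using h.symm

lemma iteratedDeriv_exp_half_sq (s : ℝ) :
    iteratedDeriv 1 (fun t : ℝ => Real.exp (s * t ^ 2 / 2)) 0 = 0 ∧
    iteratedDeriv 2 (fun t : ℝ => Real.exp (s * t ^ 2 / 2)) 0 = s ∧
    iteratedDeriv 3 (fun t : ℝ => Real.exp (s * t ^ 2 / 2)) 0 = 0 ∧
    iteratedDeriv 4 (fun t : ℝ => Real.exp (s * t ^ 2 / 2)) 0 = 3 * s ^ 2 := by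
  have h1 : iteratedDeriv 1 (fun t : ℝ => Real.exp (s * t ^ 2 / 2))
      = fun t => (s * t) * Real.exp (s * t ^ 2 / 2) := by
    rw [iteratedDeriv_one]
    simpa using deriv_mul_exp_half_sq (fun t => hasDerivAt_const t (1 : ℝ)) s
  have h2 : iteratedDeriv 2 (fun t : ℝ => Real.exp (s * t ^ 2 / 2))
      = fun t => (s + s ^ 2 * t ^ 2) * Real.exp (s * t ^ 2 / 2) := by
    rw [iteratedDeriv_succ, h1,
      deriv_mul_exp_half_sq (fun t => (hasDerivAt_id' t).const_mul s)]
    funext t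
    ring
  have h3 : iteratedDeriv 3 (fun t : ℝ => Real.exp (s * t ^ 2 / 2))
      = fun t => (3 * s ^ 2 * t + s ^ 3 * t ^ 3) * Real.exp (s * t ^ 2 / 2) := by
    rw [iteratedDeriv_succ, h2,
      deriv_mul_exp_half_sq (fun t => ((hasDerivAt_pow 2 t).const_mul (s ^ 2)).const_add s)]
    funext t
    push_cast
    ring
  have h4 : iteratedDeriv 4 (fun t : ℝ => Real.exp (s * t ^ 2 / 2))
      = fun t => (3 * s ^ 2 + 6 * s ^ 3 * t ^ 2 + s ^ 4 * t ^ 4)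
        * Real.exp (s * t ^ 2 / 2) := by
    rw [iteratedDeriv_succ, h3,
      deriv_mul_exp_half_sq (fun t => ((hasDerivAt_id' t).const_mul (3 * s ^ 2)).fun_add
        ((hasDerivAt_pow 3 t).const_mul (s ^ 3)))]
    funext t
    push_cast
    ring
  simp [h1, h2, h3, h4]

section Moments

variable {d : ℕ}

instance : IsProbabilityMeasure (stdGaussianPi d) := by
  unfold stdGaussianPi
  infer_instance

lemma map_dotProduct_stdGaussianPi (v : Fin d → ℝ) :
    (stdGaussianPi d).map (fun z => v ⬝ᵥ z) = gaussianReal 0 (v ⬝ᵥ v).toNNReal := by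
  have hm : Measurable fun z : Fin d → ℝ => v ⬝ᵥ z := by
    unfold dotProduct
    fun_prop
  have := Measure.isProbabilityMeasure_map (μ := stdGaussianPi d) hm.aemeasurable
  apply Measure.ext_of_charFun
  funext t
  have hv : 0 ≤ v ⬝ᵥ v := Finset.sum_nonneg fun i _ => mul_self_nonneg (v i)
  have hcoord (i : Fin d) : ∫ x : ℝ, Complex.exp (t * (v i * x) * Complex.I) ∂(gaussianReal 0 1)
      = Complex.exp (-(t ^ 2 * (v i * v i) / 2)) := by
    have h := charFun_gaussianReal (μ := 0) (v := 1) (t * v i)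
    rw [charFun_apply_real] at h
    convert h using 2
    · funext x
      push_cast
      ring_nf
    · push_cast
      ring
  rw [charFun_apply_real, charFun_gaussianReal, integral_map hm.aemeasurable (by fun_prop)]
  calc ∫ z, Complex.exp (t * (v ⬝ᵥ z : ℝ) * Complex.I) ∂(stdGaussianPi d)
      = ∫ z, ∏ i, Complex.exp (t * (v i * z i) * Complex.I) ∂(stdGaussianPi d) := by
        refine integral_congr_ae (.of_forall fun z => ?_)
        simp only [dotProduct, ← Complex.exp_sum, Complex.ofReal_sum, Complex.ofReal_mul,
          Finset.mul_sum, Finset.sum_mul]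
    _ = ∏ i, Complex.exp (-(t ^ 2 * (v i * v i) / 2)) := by
        rw [stdGaussianPi, integral_fintype_prod_eq_prod
          (f := fun i (x : ℝ) => Complex.exp (t * (v i * x) * Complex.I))]
        exact Finset.prod_congr rfl fun i _ => hcoord i
    _ = _ := by
        rw [← Complex.exp_sum, Real.coe_toNNReal _ hv]
        congr 1
        simp only [dotProduct, Complex.ofReal_sum, Complex.ofReal_mul, Finset.sum_neg_distrib,
          ← Finset.sum_div, ← Finset.mul_sum]
        simp
        ring

lemma hasExpectation_dotProduct_pow (v : Fin d → ℝ) (n : ℕ) :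
    HasExpectation (stdGaussianPi d) (fun z => (v ⬝ᵥ z) ^ n)
      (iteratedDeriv n (fun t : ℝ => Real.exp ((v ⬝ᵥ v) * t ^ 2 / 2)) 0) := by
  have hm : AEMeasurable (fun z : Fin d → ℝ => v ⬝ᵥ z) (stdGaussianPi d) := by
    refine Measurable.aemeasurable ?_
    unfold dotProduct
    fun_prop
  have hlaw := map_dotProduct_stdGaussianPi v
  have hv : 0 ≤ v ⬝ᵥ v := Finset.sum_nonneg fun i _ => mul_self_nonneg (v i)
  constructor
  · have h : Integrable (fun x : ℝ => x ^ n) ((stdGaussianPi d).map fun z => v ⬝ᵥ z) := by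
      rw [hlaw]
      exact integrable_pow_of_integrable_exp_mul (X := id) (t := 1) one_ne_zero
        (integrable_exp_mul_gaussianReal 1) (integrable_exp_mul_gaussianReal (-1)) n
    exact h.comp_aemeasurable hm
  · have h := integral_pow_gaussianReal_zero (v ⬝ᵥ v).toNNReal n
    rw [← hlaw, integral_map hm (by fun_prop), Real.coe_toNNReal _ hv] at h
    exact h

lemma hasExpectation_dotProduct (v : Fin d → ℝ) :
    HasExpectation (stdGaussianPi d) (fun z => v ⬝ᵥ z) 0 := by
  have h := hasExpectation_dotProduct_pow v 1
  rw [(iteratedDeriv_exp_half_sq _).1] at h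
  simpa using h

lemma hasExpectation_dotProduct_mul (u v : Fin d → ℝ) :
    HasExpectation (stdGaussianPi d) (fun z => (u ⬝ᵥ z) * (v ⬝ᵥ z)) (u ⬝ᵥ v) := by
  have h (w : Fin d → ℝ) := hasExpectation_dotProduct_pow w 2
  simp only [(iteratedDeriv_exp_half_sq _).2.1] at h
  refine (((h (u + v)).add ((h (u - v)).const_mul (-1))).const_mul (1 / 4)).congr ?_ ?_
  · intro z
    simp only [add_dotProduct, sub_dotProduct]
    ring
  · simp only [add_dotProduct, sub_dotProduct, dotProduct_add, dotProduct_sub,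
      dotProduct_comm v u]
    ring

lemma hasExpectation_dotProduct_mul_mul (u v w : Fin d → ℝ) :
    HasExpectation (stdGaussianPi d) (fun z => (u ⬝ᵥ z) * (v ⬝ᵥ z) * (w ⬝ᵥ z)) 0 := by
  have h (w : Fin d → ℝ) := hasExpectation_dotProduct_pow w 3
  simp only [(iteratedDeriv_exp_half_sq _).2.2.1] at h
  refine (((h (u + v + w)).add (((h (u + v - w)).add
    ((h (u - v + w)).add (h (v + w - u)))).const_mul (-1))).const_mul (1 / 24)).congr ?_ ?_
  · intro z
    simp only [add_dotProduct, sub_dotProduct]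
    ring
  · ring

lemma hasExpectation_dotProduct_sq_mul_sq (u v : Fin d → ℝ) :
    HasExpectation (stdGaussianPi d) (fun z => (u ⬝ᵥ z) ^ 2 * (v ⬝ᵥ z) ^ 2)
      ((u ⬝ᵥ u) * (v ⬝ᵥ v) + 2 * (u ⬝ᵥ v) ^ 2) := by
  have h (w : Fin d → ℝ) := hasExpectation_dotProduct_pow w 4
  simp only [(iteratedDeriv_exp_half_sq _).2.2.2] at h
  refine (((h (u + v)).add ((h (u - v)).add
    (((h u).add (h v)).const_mul (-2)))).const_mul (1 / 12)).congr ?_ ?_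
  · intro z
    simp only [add_dotProduct, sub_dotProduct]
    ring
  · simp only [add_dotProduct, sub_dotProduct, dotProduct_add, dotProduct_sub,
      dotProduct_comm v u]
    ring

lemma hasExpectation_dotProduct_sq_mul_mul (u v w : Fin d → ℝ) :
    HasExpectation (stdGaussianPi d) (fun z => (u ⬝ᵥ z) ^ 2 * ((v ⬝ᵥ z) * (w ⬝ᵥ z)))
      ((u ⬝ᵥ u) * (v ⬝ᵥ w) + 2 * ((u ⬝ᵥ v) * (u ⬝ᵥ w))) := by
  have h := hasExpectation_dotProduct_sq_mul_sq u
  refine (((h (v + w)).add ((h (v - w)).const_mul (-1))).const_mul (1 / 4)).congr ?_ ?_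
  · intro z
    simp only [add_dotProduct, sub_dotProduct]
    ring
  · simp only [add_dotProduct, sub_dotProduct, dotProduct_add, dotProduct_sub,
      dotProduct_comm w v]
    ring

lemma hasExpectation_affine_mul_affine (m n : Fin d → ℝ) (b c : ℝ) :
    HasExpectation (stdGaussianPi d) (fun z => (m ⬝ᵥ z + b) * (n ⬝ᵥ z + c))
      (m ⬝ᵥ n + b * c) := by
  refine ((hasExpectation_dotProduct_mul m n).add
    (((hasExpectation_dotProduct m).const_mul c).add
    (((hasExpectation_dotProduct n).const_mul b).add (.const (b * c))))).congr ?_ ?_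
  · intro z
    ring
  · ring

lemma hasExpectation_affine_sq_mul_centered (v m n : Fin d → ℝ) (a b c : ℝ) :
    HasExpectation (stdGaussianPi d)
      (fun z => (v ⬝ᵥ z + a) ^ 2 * ((m ⬝ᵥ z + b) * (n ⬝ᵥ z + c) - (m ⬝ᵥ n + b * c)))
      (2 * ((v ⬝ᵥ m) * (v ⬝ᵥ n)) + 2 * a * ((v ⬝ᵥ m) * c + b * (v ⬝ᵥ n))) := by
  refine ((hasExpectation_dotProduct_sq_mul_mul v m n).add
    (((hasExpectation_dotProduct_mul_mul v v m).const_mul c).add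
    (((hasExpectation_dotProduct_mul_mul v v n).const_mul b).add
    (((hasExpectation_dotProduct_mul v v).const_mul (-(m ⬝ᵥ n))).add
    (((hasExpectation_dotProduct_mul_mul v m n).const_mul (2 * a)).add
    (((hasExpectation_dotProduct_mul v m).const_mul (2 * a * c)).add
    (((hasExpectation_dotProduct_mul v n).const_mul (2 * a * b)).add
    (((hasExpectation_dotProduct v).const_mul (-(2 * a * (m ⬝ᵥ n)))).add
    (((hasExpectation_dotProduct_mul m n).const_mul (a ^ 2)).add
    (((hasExpectation_dotProduct m).const_mul (a ^ 2 * c)).add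
    (((hasExpectation_dotProduct n).const_mul (a ^ 2 * b)).add
    (.const (-(a ^ 2 * (m ⬝ᵥ n))))))))))))))).congr ?_ ?_
  · intro z
    ring
  · ring

end Moments

lemma dotProduct_mulVec_eq_sum {n : ℕ} (P : Matrix (Fin n) (Fin n) ℝ) (u w : Fin n → ℝ) :
    u ⬝ᵥ P.mulVec w = ∑ k, ∑ l, P k l * (u k * w l) := by
  simp only [dotProduct, mulVec, Finset.mul_sum]
  exact Finset.sum_congr rfl fun k _ => Finset.sum_congr rfl fun l _ => by ring

/-- The Gaussian integral of the square of an affine form against a centered quadratic form. -/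
lemma integral_affine_sq_mul_quadratic_sub_integral {d n : ℕ} (v : Fin d → ℝ) (a : ℝ)
    (M : Matrix (Fin n) (Fin d) ℝ) (c : Fin n → ℝ) (P : Matrix (Fin n) (Fin n) ℝ) :
    ∫ z, (v ⬝ᵥ z + a) ^ 2 * ((1 / 2) * ((M.mulVec z + c) ⬝ᵥ P.mulVec (M.mulVec z + c))
        - ∫ z', (1 / 2) * ((M.mulVec z' + c) ⬝ᵥ P.mulVec (M.mulVec z' + c))
          ∂(stdGaussianPi d)) ∂(stdGaussianPi d)
      = M.mulVec v ⬝ᵥ P.mulVec (M.mulVec v)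
        + a * (M.mulVec v ⬝ᵥ P.mulVec c + c ⬝ᵥ P.mulVec (M.mulVec v)) := by
  have hE : HasExpectation (stdGaussianPi d)
      (fun z => (1 / 2) * ((M.mulVec z + c) ⬝ᵥ P.mulVec (M.mulVec z + c)))
      ((1 / 2) * ∑ k, ∑ l, P k l * (M k ⬝ᵥ M l + c k * c l)) := by
    simp only [dotProduct_mulVec_eq_sum]
    exact (HasExpectation.sum fun k _ => HasExpectation.sum fun l _ =>
      (hasExpectation_affine_mul_affine (M k) (M l) (c k) (c l)).const_mul (P k l)).const_mul _
  rw [hE.2]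
  have hI := (HasExpectation.sum (s := Finset.univ) fun k _ =>
    HasExpectation.sum (s := Finset.univ) fun l _ =>
      (hasExpectation_affine_sq_mul_centered v (M k) (M l) a (c k) (c l)).const_mul
        (1 / 2 * P k l))
  refine (hI.congr ?_ ?_).2
  · intro z
    rw [dotProduct_mulVec_eq_sum, ← mul_sub, ← Finset.sum_sub_distrib]
    simp only [← Finset.sum_sub_distrib, Finset.mul_sum]
    refine Finset.sum_congr rfl fun k _ => Finset.sum_congr rfl fun l _ => ?_
    simp only [Pi.add_apply, mulVec]
    ring
  · simp only [dotProduct_mulVec_eq_sum, ← Finset.sum_add_distrib, Finset.mul_sum]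
    refine Finset.sum_congr rfl fun k _ => Finset.sum_congr rfl fun l _ => ?_
    simp only [mulVec, dotProduct_comm _ v]
    ring

/-- For a Gaussian measure `ρ = N(μ, Σ)` with `Σ = LLᵀ` (realized as the law
of `X = μ + LZ` under the standard Gaussian) and the quadratic negative log-likelihood
`h(x) = (1/2)(Hx-β)ᵀR⁻¹(Hx-β)`, writing `A = HᵀR⁻¹H`, `B = HᵀR⁻¹` and `Ω = μμᵀ`,
for every `y`: `∫ (⟨x,y⟩+1)² (h(x) - ∫h dρ) dρ(x)
= yᵀ(ΣAΣ + ΩAΣ + ΣAΩ - μ(ΣBβ)ᵀ - (ΣBβ)μᵀ)y + 2yᵀ(ΣAμ - ΣBβ)`. -/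
theorem stmt14 {d d' : ℕ} (μ : Fin d → ℝ) (L : Matrix (Fin d) (Fin d) ℝ)
    (H : Matrix (Fin d') (Fin d) ℝ) (R : Matrix (Fin d') (Fin d') ℝ)
    (hR : R.PosDef) (hRsymm : R.IsSymm) (β : Fin d' → ℝ) :
    ∀ y : Fin d → ℝ,
      (∫ z, ((μ + L.mulVec z) ⬝ᵥ y + 1) ^ 2 *
          ((1 / 2) * ((H.mulVec (μ + L.mulVec z) - β) ⬝ᵥ
              R⁻¹.mulVec (H.mulVec (μ + L.mulVec z) - β))
            - ∫ z', (1 / 2) * ((H.mulVec (μ + L.mulVec z') - β) ⬝ᵥ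
                R⁻¹.mulVec (H.mulVec (μ + L.mulVec z') - β)) ∂(stdGaussianPi d))
          ∂(stdGaussianPi d))
      = y ⬝ᵥ ((L * Lᵀ) * (Hᵀ * R⁻¹ * H) * (L * Lᵀ)
            + vecMulVec μ μ * (Hᵀ * R⁻¹ * H) * (L * Lᵀ)
            + (L * Lᵀ) * (Hᵀ * R⁻¹ * H) * vecMulVec μ μ
            - vecMulVec μ (((L * Lᵀ) * (Hᵀ * R⁻¹)).mulVec β)
            - vecMulVec (((L * Lᵀ) * (Hᵀ * R⁻¹)).mulVec β) μ).mulVec y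
        + 2 * (y ⬝ᵥ (((L * Lᵀ) * (Hᵀ * R⁻¹ * H)).mulVec μ
            - ((L * Lᵀ) * (Hᵀ * R⁻¹)).mulVec β)) := by
  intro y
  have hP : (R⁻¹)ᵀ = R⁻¹ := by rw [transpose_nonsing_inv, hRsymm.eq]
  have hsymm (u w : Fin d' → ℝ) : u ⬝ᵥ R⁻¹.mulVec w = w ⬝ᵥ R⁻¹.mulVec u := by
    rw [dotProduct_mulVec, ← mulVec_transpose, hP, dotProduct_comm]
  have haff (z : Fin d → ℝ) : (μ + L.mulVec z) ⬝ᵥ y + 1 = Lᵀ.mulVec y ⬝ᵥ z + (μ ⬝ᵥ y + 1) := by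
    rw [add_dotProduct, mulVec_transpose, ← dotProduct_mulVec, dotProduct_comm y]
    ring
  have hres (z : Fin d → ℝ) :
      H.mulVec (μ + L.mulVec z) - β = (H * L).mulVec z + (H.mulVec μ - β) := by
    rw [mulVec_add, mulVec_mulVec]
    abel
  have hadj (w : Fin d' → ℝ) : y ⬝ᵥ L.mulVec (Lᵀ.mulVec (Hᵀ.mulVec w))
      = H.mulVec (L.mulVec (Lᵀ.mulVec y)) ⬝ᵥ w := by
    rw [dotProduct_mulVec, dotProduct_mulVec, dotProduct_mulVec, vecMul_transpose,
      vecMul_transpose, mulVec_transpose]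
  have hadj_mean (w : Fin d' → ℝ) : μ ⬝ᵥ Hᵀ.mulVec w = H.mulVec μ ⬝ᵥ w := by
    rw [dotProduct_mulVec, vecMul_transpose]
  simp only [haff, hres]
  rw [integral_affine_sq_mul_quadratic_sub_integral, hsymm (H.mulVec μ - β)]
  simp only [sub_mulVec, add_mulVec, ← mulVec_mulVec, vecMulVec_mulVec, mulVec_smul, mulVec_sub,
    dotProduct_add, dotProduct_sub, dotProduct_smul, op_smul_eq_smul, smul_eq_mul, hadj, hadj_mean,
    dotProduct_comm _ y, hsymm (H.mulVec μ)]
  rw [dotProduct_comm y μ]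
  ring
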